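/- Let C be a closed convex cone in a finite-dimensional real normed vector space V, let α be a continuous antinorm associated with C, and let p ∈ C^∨. Then the set p^∨ = ⋃_{r ≥ 0} p^∨_r is a closed convex cone. -/

import Mathlib

open Set

variable {V : Type*} [NormedAddCommGroup V] [NormedSpace ℝ V]

/-- `C` is a closed convex cone (containing the origin). -/
def IsClosedConvexCone (C : Set V) : Prop :=
  (0 : V) ∈ C ∧ IsClosed C ∧ Convex ℝ C ∧ ∀ c : ℝ, 0 < c → ∀ x ∈ C, c • x ∈ C

/-- A cone is salient if it contains no nonzero linear subspace,
equivalently it contains no pair `x, -x` with `x ≠ 0`. -/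
def IsSalientCone (C : Set V) : Prop := ∀ x ∈ C, x ≠ 0 → -x ∉ C

/-- The relative boundary of a set: the set minus its relative (intrinsic) interior. -/
def relBoundary (C : Set V) : Set V := C \ intrinsicInterior ℝ C

/-- `a` is an antinorm associated with the cone `C` : it takes values in `ℝ ∪ {-∞}`,
is positive on the relative interior of `C`, vanishes on the relative boundary of `C`,
is `-∞` off `C`, is positively homogeneous and superadditive (concave). -/
def IsAntinorm (C : Set V) (a : V → EReal) : Prop :=
  (∀ v, a v ≠ ⊤) ∧
  (∀ v ∈ intrinsicInterior ℝ C, 0 < a v) ∧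
  (∀ v ∈ relBoundary C, a v = 0) ∧
  (∀ v, v ∉ C → a v = ⊥) ∧
  (∀ c : ℝ, 0 < c → ∀ v, a (c • v) = (c : EReal) * a v) ∧
  (∀ v w, a v + a w ≤ a (v + w))

/-- The negative dual cone `C^∨ = {p : ⟨p,u⟩ ≤ 0 ∀ u ∈ C}`. -/
def negDual (C : Set V) : Set (V →L[ℝ] ℝ) := {p | ∀ u ∈ C, p u ≤ 0}

/-- The antisphere of radius `r`. -/
def antisphere (a : V → EReal) (r : ℝ) : Set V := {v | a v = (r : EReal)}

/-- The dual function `α^∨(p) = -sup_{v ∈ S₁} ⟨p, v⟩`. -/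
noncomputable def dualFn (a : V → EReal) (p : V →L[ℝ] ℝ) : EReal :=
  - sSup ((fun v => ((p v : ℝ) : EReal)) '' antisphere a 1)

/-- `p^∨_r` : the set of maximizers of `v ↦ ⟨p, v⟩` over the antisphere `S_r`. -/
def maxSet (a : V → EReal) (p : V →L[ℝ] ℝ) (r : ℝ) : Set V :=
  {v ∈ antisphere a r | ∀ w ∈ antisphere a r, p w ≤ p v}

/-- `p^∨ = ⋃_{r ≥ 0} p^∨_r`. -/
def pDual (a : V → EReal) (p : V →L[ℝ] ℝ) : Set V := ⋃ r ∈ Ici (0 : ℝ), maxSet a p r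

/-! Every `v ∈ C` satisfies the reverse Cauchy–Schwarz inequality `⟨p, v⟩ + α^∨(p) α(v) ≤ 0`: where
`α(v) = 0` because `p ∈ C^∨`, and elsewhere by rescaling to the unit antisphere, on which
`-α^∨(p)` is the supremum of `p`. A point of `C` maximizes `p` on its antisphere exactly when
equality holds. Thus `p^∨` is the set where the left-hand side is nonnegative, and the left-hand
side is homogeneous, concave and upper semicontinuous on `C`. -/

theorem upperSemicontinuousOn_toReal {X : Type*} [TopologicalSpace X] {s : Set X} {f : X → EReal}
    (hf : UpperSemicontinuousOn f s) (hbot : ∀ x ∈ s, f x ≠ ⊥) (htop : ∀ x ∈ s, f x ≠ ⊤) :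
    UpperSemicontinuousOn (fun x ↦ (f x).toReal) s := by
  intro x hx y hy
  have hxy : f x < (y : EReal) := by
    rwa [← EReal.coe_toReal (htop x hx) (hbot x hx), EReal.coe_lt_coe_iff]
  filter_upwards [hf x hx y hxy, self_mem_nhdsWithin] with z hz hzs
  rwa [← EReal.coe_toReal (htop z hzs) (hbot z hzs), EReal.coe_lt_coe_iff] at hz

theorem isClosed_setOf_mem_and_le {X β : Type*} [TopologicalSpace X] [LinearOrder β]
    {s : Set X} {f : X → β} (hf : UpperSemicontinuousOn f s) (hs : IsClosed s) (b : β) :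
    IsClosed {x | x ∈ s ∧ b ≤ f x} := by
  obtain ⟨t, ht, hst⟩ := upperSemicontinuousOn_iff_preimage_Ici.mp hf b
  have hset : {x | x ∈ s ∧ b ≤ f x} = s ∩ t := hst
  exact hset ▸ hs.inter ht

theorem dualFn_le_neg_apply {a : V → EReal} {p : V →L[ℝ] ℝ} {v : V} (hv : v ∈ antisphere a 1) :
    dualFn a p ≤ ((-p v : ℝ) : EReal) := by
  rw [dualFn, EReal.coe_neg, EReal.neg_le_neg_iff]
  exact le_sSup (mem_image_of_mem _ hv)

theorem dualFn_eq_of_mem_maxSet {a : V → EReal} {p : V →L[ℝ] ℝ} {v : V}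
    (hv : v ∈ maxSet a p 1) : dualFn a p = ((-p v : ℝ) : EReal) := by
  refine le_antisymm (dualFn_le_neg_apply hv.1) ?_
  rw [dualFn, EReal.coe_neg, EReal.neg_le_neg_iff]
  refine sSup_le ?_
  rintro _ ⟨w, hw, rfl⟩
  exact EReal.coe_le_coe (hv.2 w hw)

/-- The left-hand side `⟨p, v⟩ + α^∨(p) α(v)` of the reverse Cauchy–Schwarz inequality. If the unit
antisphere is empty then `α^∨(p) = ⊤`, and `toReal` replaces it by `0`. -/
noncomputable def cauchySchwarzGap (a : V → EReal) (p : V →L[ℝ] ℝ) (v : V) : ℝ :=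
  p v + (dualFn a p).toReal * (a v).toReal

namespace IsAntinorm

variable {C : Set V} {a : V → EReal} {p : V →L[ℝ] ℝ} {r c : ℝ} {v w : V}

theorem nonneg_iff_mem (ha : IsAntinorm C a) : 0 ≤ a v ↔ v ∈ C := by
  obtain ⟨-, hpos, hzero, hbot, -, -⟩ := ha
  constructor
  · intro hv
    by_contra hvC
    exact EReal.bot_lt_zero.not_ge (hbot v hvC ▸ hv)
  · intro hv
    by_cases hint : v ∈ intrinsicInterior ℝ C
    · exact (hpos v hint).le
    · exact (hzero v ⟨hv, hint⟩).ge

theorem ne_top (ha : IsAntinorm C a) (v : V) : a v ≠ ⊤ := ha.1 v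

theorem ne_bot (ha : IsAntinorm C a) (hv : v ∈ C) : a v ≠ ⊥ :=
  (EReal.bot_lt_zero.trans_le (ha.nonneg_iff_mem.mpr hv)).ne'

theorem coe_toReal (ha : IsAntinorm C a) (hv : v ∈ C) : ((a v).toReal : EReal) = a v :=
  EReal.coe_toReal (ha.ne_top v) (ha.ne_bot hv)

theorem smul (ha : IsAntinorm C a) (hc : 0 < c) (v : V) : a (c • v) = c * a v :=
  ha.2.2.2.2.1 c hc v

theorem add_le (ha : IsAntinorm C a) (v w : V) : a v + a w ≤ a (v + w) :=
  ha.2.2.2.2.2 v w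

theorem smul_mem (ha : IsAntinorm C a) (hc : 0 < c) (hv : v ∈ C) : c • v ∈ C := by
  rw [← ha.nonneg_iff_mem] at hv ⊢
  rw [ha.smul hc]
  exact mul_nonneg (EReal.coe_nonneg.mpr hc.le) hv

theorem add_mem (ha : IsAntinorm C a) (hv : v ∈ C) (hw : w ∈ C) : v + w ∈ C := by
  rw [← ha.nonneg_iff_mem] at hv hw ⊢
  exact (add_nonneg hv hw).trans (ha.add_le v w)

theorem toReal_smul (ha : IsAntinorm C a) (hc : 0 < c) (v : V) :
    (a (c • v)).toReal = c * (a v).toReal := by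
  rw [ha.smul hc, EReal.toReal_mul, EReal.toReal_coe]

theorem toReal_add_le (ha : IsAntinorm C a) (hv : v ∈ C) (hw : w ∈ C) :
    (a v).toReal + (a w).toReal ≤ (a (v + w)).toReal := by
  have hadd := ha.add_le v w
  rw [← ha.coe_toReal hv, ← ha.coe_toReal hw, ← ha.coe_toReal (ha.add_mem hv hw)] at hadd
  exact_mod_cast hadd

theorem toReal_zero (ha : IsAntinorm C a) : (a 0).toReal = 0 := by
  have htwo := ha.toReal_smul two_pos 0
  rw [smul_zero] at htwo
  linarith

theorem concaveOn_toReal (ha : IsAntinorm C a) (hC : Convex ℝ C) :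
    ConcaveOn ℝ C fun v ↦ (a v).toReal := by
  refine concaveOn_iff_forall_pos.mpr ⟨hC, fun v hv w hw s t hs ht _ ↦ ?_⟩
  simpa only [ha.toReal_smul hs, ha.toReal_smul ht, smul_eq_mul] using
    ha.toReal_add_le (ha.smul_mem hs hv) (ha.smul_mem ht hw)

theorem upperSemicontinuousOn_toReal (ha : IsAntinorm C a) (hcont : UpperSemicontinuousOn a C) :
    UpperSemicontinuousOn (fun v ↦ (a v).toReal) C :=
  _root_.upperSemicontinuousOn_toReal hcont (fun _ hv ↦ ha.ne_bot hv) fun v _ ↦ ha.ne_top v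

theorem mem_antisphere_iff (ha : IsAntinorm C a) (hr : 0 ≤ r) :
    v ∈ antisphere a r ↔ v ∈ C ∧ (a v).toReal = r := by
  constructor
  · intro hv
    have hav : a v = (r : EReal) := hv
    exact ⟨ha.nonneg_iff_mem.mp (hav ▸ EReal.coe_nonneg.mpr hr), hav ▸ EReal.toReal_coe r⟩
  · rintro ⟨hv, rfl⟩
    exact (ha.coe_toReal hv).symm

theorem smul_mem_antisphere (ha : IsAntinorm C a) (hc : 0 < c) (hv : v ∈ antisphere a r) :
    c • v ∈ antisphere a (c * r) := by
  have hav : a v = (r : EReal) := hv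
  change a (c • v) = ((c * r : ℝ) : EReal)
  rw [ha.smul hc, hav, EReal.coe_mul]

theorem inv_smul_mem_maxSet_one (ha : IsAntinorm C a) (hr : 0 < r) (hv : v ∈ maxSet a p r) :
    r⁻¹ • v ∈ maxSet a p 1 := by
  refine ⟨inv_mul_cancel₀ hr.ne' ▸ ha.smul_mem_antisphere (inv_pos.mpr hr) hv.1, fun w hw ↦ ?_⟩
  have hmax : p (r • w) ≤ p v := hv.2 _ (by simpa only [mul_one] using ha.smul_mem_antisphere hr hw)
  rw [map_smul, smul_eq_mul] at hmax ⊢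
  exact (le_inv_mul_iff₀ hr).mpr hmax

theorem dualFn_nonneg (ha : IsAntinorm C a) (hp : p ∈ negDual C) : 0 ≤ dualFn a p := by
  rw [dualFn, EReal.le_neg, neg_zero]
  refine sSup_le ?_
  rintro _ ⟨v, hv, rfl⟩
  exact EReal.coe_nonpos.mpr (hp v ((ha.mem_antisphere_iff zero_le_one).mp hv).1)

theorem cauchySchwarzGap_smul (ha : IsAntinorm C a) (hc : 0 < c) (v : V) :
    cauchySchwarzGap a p (c • v) = c * cauchySchwarzGap a p v := by
  rw [cauchySchwarzGap, cauchySchwarzGap, ha.toReal_smul hc, map_smul, smul_eq_mul]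
  ring

theorem cauchySchwarzGap_nonpos_of_mem_antisphere_one (ha : IsAntinorm C a) (hp : p ∈ negDual C)
    (hv : v ∈ antisphere a 1) : cauchySchwarzGap a p v ≤ 0 := by
  have hdual : (dualFn a p).toReal ≤ -p v :=
    EReal.toReal_le_toReal (dualFn_le_neg_apply hv)
      (EReal.bot_lt_zero.trans_le (ha.dualFn_nonneg hp)).ne' (EReal.coe_ne_top _)
  rw [cauchySchwarzGap, ((ha.mem_antisphere_iff zero_le_one).mp hv).2]
  linarith

theorem cauchySchwarzGap_nonpos (ha : IsAntinorm C a) (hp : p ∈ negDual C) (hv : v ∈ C) :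
    cauchySchwarzGap a p v ≤ 0 := by
  rcases (EReal.toReal_nonneg (ha.nonneg_iff_mem.mpr hv)).eq_or_lt with hzero | hpos
  · rw [cauchySchwarzGap, ← hzero, mul_zero, add_zero]
    exact hp v hv
  · have hinv : 0 < (a v).toReal⁻¹ := inv_pos.mpr hpos
    have hunit : (a v).toReal⁻¹ • v ∈ antisphere a 1 :=
      inv_mul_cancel₀ hpos.ne' ▸ ha.smul_mem_antisphere hinv (ha.coe_toReal hv).symm
    have hgap := ha.cauchySchwarzGap_nonpos_of_mem_antisphere_one hp hunit
    rw [ha.cauchySchwarzGap_smul hinv] at hgap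
    exact nonpos_of_mul_nonpos_right hgap hinv

theorem cauchySchwarzGap_nonneg_of_mem_maxSet (ha : IsAntinorm C a) (h0 : (0 : V) ∈ C)
    (hr : 0 ≤ r) (hv : v ∈ maxSet a p r) : 0 ≤ cauchySchwarzGap a p v := by
  rcases hr.eq_or_lt with rfl | hpos
  · have hzero : (0 : V) ∈ antisphere a 0 :=
      (ha.mem_antisphere_iff le_rfl).mpr ⟨h0, ha.toReal_zero⟩
    have hpv : 0 ≤ p v := map_zero p ▸ hv.2 0 hzero
    rwa [cauchySchwarzGap, ((ha.mem_antisphere_iff le_rfl).mp hv.1).2, mul_zero, add_zero]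
  · have hdual : (dualFn a p).toReal = -(r⁻¹ * p v) := by
      rw [dualFn_eq_of_mem_maxSet (ha.inv_smul_mem_maxSet_one hpos hv), EReal.toReal_coe,
        map_smul, smul_eq_mul]
    rw [cauchySchwarzGap, hdual, ((ha.mem_antisphere_iff hr).mp hv.1).2, neg_mul, mul_right_comm,
      inv_mul_cancel₀ hpos.ne', one_mul, add_neg_cancel]

theorem mem_maxSet_of_cauchySchwarzGap_nonneg (ha : IsAntinorm C a) (hp : p ∈ negDual C)
    (hv : v ∈ C) (hgap : 0 ≤ cauchySchwarzGap a p v) : v ∈ maxSet a p (a v).toReal := by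
  have hr : 0 ≤ (a v).toReal := EReal.toReal_nonneg (ha.nonneg_iff_mem.mpr hv)
  refine ⟨(ha.coe_toReal hv).symm, fun w hw ↦ ?_⟩
  obtain ⟨hwC, hwr⟩ := (ha.mem_antisphere_iff hr).mp hw
  have hle : cauchySchwarzGap a p w ≤ cauchySchwarzGap a p v :=
    (ha.cauchySchwarzGap_nonpos hp hwC).trans hgap
  rw [cauchySchwarzGap, cauchySchwarzGap, hwr] at hle
  exact le_of_add_le_add_right hle

theorem pDual_eq_setOf_cauchySchwarzGap_nonneg (ha : IsAntinorm C a) (h0 : (0 : V) ∈ C)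
    (hp : p ∈ negDual C) : pDual a p = {v | v ∈ C ∧ 0 ≤ cauchySchwarzGap a p v} := by
  ext v
  simp only [pDual, mem_iUnion, mem_Ici, exists_prop, mem_ofPred_eq]
  constructor
  · rintro ⟨r, hr, hv⟩
    exact ⟨((ha.mem_antisphere_iff hr).mp hv.1).1,
      ha.cauchySchwarzGap_nonneg_of_mem_maxSet h0 hr hv⟩
  · rintro ⟨hv, hgap⟩
    exact ⟨(a v).toReal, EReal.toReal_nonneg (ha.nonneg_iff_mem.mpr hv),
      ha.mem_maxSet_of_cauchySchwarzGap_nonneg hp hv hgap⟩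

theorem concaveOn_cauchySchwarzGap (ha : IsAntinorm C a) (hC : Convex ℝ C)
    (hp : p ∈ negDual C) : ConcaveOn ℝ C (cauchySchwarzGap a p) :=
  (p.toLinearMap.concaveOn hC).add
    ((ha.concaveOn_toReal hC).smul (EReal.toReal_nonneg (ha.dualFn_nonneg hp)))

theorem upperSemicontinuousOn_cauchySchwarzGap (ha : IsAntinorm C a)
    (hcont : UpperSemicontinuousOn a C) (hp : p ∈ negDual C) :
    UpperSemicontinuousOn (cauchySchwarzGap a p) C := by
  have hdual : 0 ≤ (dualFn a p).toReal := EReal.toReal_nonneg (ha.dualFn_nonneg hp)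
  exact (p.continuous.upperSemicontinuous.upperSemicontinuousOn C).add
    ((continuous_const_mul _).comp_upperSemicontinuousOn (ha.upperSemicontinuousOn_toReal hcont)
      (monotone_mul_left_of_nonneg hdual))

end IsAntinorm

theorem statement4_general {V : Type*} [NormedAddCommGroup V] [NormedSpace ℝ V]
    (C : Set V) (hC : IsClosedConvexCone C)
    (a : V → EReal) (ha : IsAntinorm C a) (hcont : UpperSemicontinuousOn a C)
    (p : V →L[ℝ] ℝ) (hp : p ∈ negDual C) :
    IsClosedConvexCone (pDual a p) := by
  obtain ⟨h0, hclosed, hconvex, hcone⟩ := hC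
  rw [ha.pDual_eq_setOf_cauchySchwarzGap_nonneg h0 hp]
  refine ⟨⟨h0, ?_⟩, ?_, ?_, ?_⟩
  · rw [cauchySchwarzGap, ha.toReal_zero, map_zero, mul_zero, add_zero]
  · exact isClosed_setOf_mem_and_le (ha.upperSemicontinuousOn_cauchySchwarzGap hcont hp) hclosed 0
  · exact (ha.concaveOn_cauchySchwarzGap hconvex hp).convex_ge 0
  · rintro c hc v ⟨hv, hgap⟩
    exact ⟨hcone c hc v hv, ha.cauchySchwarzGap_smul hc v ▸ mul_nonneg hc.le hgap⟩

/-- For a closed convex cone `C`, a continuous antinorm `a` associated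
with `C` and `p ∈ C^∨`, the set `p^∨ = ⋃_{r ≥ 0} p^∨_r` is a closed convex cone. -/
theorem statement4 {V : Type*} [NormedAddCommGroup V] [NormedSpace ℝ V] [FiniteDimensional ℝ V]
    (C : Set V) (hC : IsClosedConvexCone C)
    (a : V → EReal) (ha : IsAntinorm C a) (hcont : ContinuousOn a C)
    (p : V →L[ℝ] ℝ) (hp : p ∈ negDual C) :
    IsClosedConvexCone (pDual a p) :=
  statement4_general C hC a ha hcont.upperSemicontinuousOn p hp
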